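/- arXiv:1808.03539 — 3 statements merged into one kernel-verified Lean document; each statement's English description precedes it below -/
import Mathlib

section
/- Let R be a commutative ring, A a commutative R-algebra, I an ideal of A, m an ideal of R, and r a natural number. If the quotient A/I^r is flat as an R-module, then the natural A-linear map I^r ⊗_A (A/mA) → A/mA induced by the inclusion I^r ⊆ A is injective, and its image is Ī^r, the r-th power of the image ideal of I in A/mA. -/
/-!
Write `J = mA` and `K = I ^ r`. Since `A ⧸ J` is generated by `1`, every element of
`K ⊗[A] (A ⧸ J)` has the form `x ⊗ 1` with `x ∈ K` (`exists_tmul_one`), and it is sent to the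
class of `x`; this gives the image at once. For injectivity, `x ⊗ 1` lies in the kernel exactly
when `x ∈ K ∩ J`, while `x ⊗ 1 = 0` as soon as `x ∈ J * K` (`tmul_one_eq_zero`). Flatness of
`A ⧸ K` over `R` supplies the missing inclusion `K ∩ mA ⊆ mA * K` (`inf_map_le_mul`), an
elementary form of the vanishing of `Tor₁ (A ⧸ K, R ⧸ m)`.
-/

open TensorProduct

/-- An element `x` of `K ∩ mA` is the image of some `t ∈ m ⊗ A` under
`c ⊗ a ↦ c • a`. The image of `t` in
`m ⊗ (A ⧸ K)` vanishes because `m ⊗ (A ⧸ K) → A ⧸ K` is injective by flatness, so by right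
exactness `t` comes from `m ⊗ K`, and `x` is a sum of products of elements of `m` and `K`. -/
lemma inf_map_le_mul {R A : Type*} [CommRing R] [CommRing A] [Algebra R A]
    (K : Ideal A) (m : Ideal R) (hflat : Module.Flat R (A ⧸ K)) :
    K ⊓ m.map (algebraMap R A) ≤ m.map (algebraMap R A) * K := by
  rintro x ⟨hxK, hxm⟩
  let act (M : Type _) [AddCommGroup M] [Module R M] : m ⊗[R] M →ₗ[R] M :=
    TensorProduct.lift ((LinearMap.lsmul R M).comp m.subtype)
  obtain ⟨t, rfl⟩ : ∃ t : m ⊗[R] A, act A t = x := by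
    refine Submodule.span_induction ?_ ⟨0, map_zero _⟩ ?_ ?_ hxm
    · rintro _ ⟨c, hc, rfl⟩
      exact ⟨⟨c, hc⟩ ⊗ₜ 1, by simp [act, Algebra.smul_def]⟩
    · rintro _ _ - - ⟨s, rfl⟩ ⟨t, rfl⟩
      exact ⟨s + t, map_add _ _ _⟩
    · rintro a _ - ⟨t, rfl⟩
      refine ⟨(LinearMap.mulLeft R a).lTensor m t, ?_⟩
      induction t with
      | zero => simp
      | tmul c b => simp [act]
      | add s t hs ht => simp only [map_add, hs, ht, smul_add]
  let i : K.restrictScalars R →ₗ[R] A := (K.restrictScalars R).subtype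
  let q : A →ₗ[R] A ⧸ K := (Ideal.Quotient.mkₐ R K).toLinearMap
  have hq : Function.Surjective q := Ideal.Quotient.mk_surjective
  have hiq : Function.Exact i q := fun a => by
    simp [i, q, Ideal.Quotient.eq_zero_iff_mem]
  have hinj : Function.Injective (act (A ⧸ K)) := by
    simpa [act, ← LinearMap.lid_comp_rTensor] using
      Module.Flat.rTensor_preserves_injective_linearMap (M := A ⧸ K) m.subtype
        m.injective_subtype
  have hnat : act (A ⧸ K) (q.lTensor m t) = q (act A t) := by
    clear hxK hxm
    induction t with
    | zero => simp
    | tmul c b => simp [act]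
    | add s t hs ht => simp only [map_add, hs, ht]
  have ht : q.lTensor m t = 0 := hinj (by
    rw [hnat, map_zero]
    exact Ideal.Quotient.eq_zero_iff_mem.mpr hxK)
  obtain ⟨s, rfl⟩ := (lTensor_exact m hiq hq t).mp ht
  clear ht hnat hxK hxm
  induction s with
  | zero => simp
  | tmul c b =>
    have : act A (i.lTensor m (c ⊗ₜ b)) = algebraMap R A c * b := by
      simp [act, i, Algebra.smul_def]
    rw [this]
    exact Ideal.mul_mem_mul (Ideal.mem_map_of_mem _ c.2) b.2
  | add s t hs ht =>
    simp only [map_add]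
    exact add_mem hs ht

lemma tmul_one_eq_zero {A : Type*} [CommRing A] (J K : Ideal A) (x : K)
    (hx : (x : A) ∈ J * K) : x ⊗ₜ[A] (1 : A ⧸ J) = 0 := by
  -- Membership in `K` is carried along so that the induction on `J * K` can form the tensor.
  have key : ∀ y ∈ J * K, ∃ h : y ∈ K, (⟨y, h⟩ : K) ⊗ₜ[A] (1 : A ⧸ J) = 0 := by
    intro y hy
    induction hy using Submodule.mul_induction_on' with
    | mem_mul_mem a ha b hb =>
      refine ⟨K.mul_mem_left a hb, ?_⟩
      have : (⟨a * b, K.mul_mem_left a hb⟩ : K) = a • ⟨b, hb⟩ := rfl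
      rw [this, TensorProduct.smul_tmul, Algebra.smul_def, Ideal.Quotient.algebraMap_eq,
        Ideal.Quotient.eq_zero_iff_mem.mpr ha, zero_mul, TensorProduct.tmul_zero]
    | add a _ b _ ha hb =>
      obtain ⟨ha, ha'⟩ := ha
      obtain ⟨hb, hb'⟩ := hb
      refine ⟨add_mem ha hb, ?_⟩
      have : (⟨a + b, add_mem ha hb⟩ : K) = ⟨a, ha⟩ + ⟨b, hb⟩ := rfl
      rw [this, TensorProduct.add_tmul, ha', hb', add_zero]
  exact (key x hx).2

lemma exists_tmul_one {A : Type*} [CommRing A] (J K : Ideal A) (t : K ⊗[A] (A ⧸ J)) :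
    ∃ x : K, x ⊗ₜ[A] (1 : A ⧸ J) = t := by
  induction t with
  | zero => exact ⟨0, TensorProduct.zero_tmul _ _⟩
  | tmul x b =>
    obtain ⟨a, rfl⟩ := Ideal.Quotient.mk_surjective b
    refine ⟨a • x, ?_⟩
    rw [TensorProduct.smul_tmul, Algebra.smul_def, mul_one, Ideal.Quotient.algebraMap_eq]
  | add s t hs ht =>
    obtain ⟨x, rfl⟩ := hs
    obtain ⟨y, rfl⟩ := ht
    exact ⟨x + y, TensorProduct.add_tmul _ _ _⟩

theorem stmt_0 {R A : Type*} [CommRing R] [CommRing A] [Algebra R A]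
    (I : Ideal A) (m : Ideal R) (r : ℕ)
    (hflat : Module.Flat R (A ⧸ I ^ r)) :
    Function.Injective
      (TensorProduct.lift
        ((LinearMap.lsmul A (A ⧸ m.map (algebraMap R A))).comp (I ^ r).subtype)) ∧
    LinearMap.range
      (TensorProduct.lift
        ((LinearMap.lsmul A (A ⧸ m.map (algebraMap R A))).comp (I ^ r).subtype)) =
      ((I.map (Ideal.Quotient.mk (m.map (algebraMap R A)))) ^ r).restrictScalars A := by
  set J := m.map (algebraMap R A) with hJ
  have hval : ∀ x : (I ^ r : Ideal A), TensorProduct.lift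
      ((LinearMap.lsmul A (A ⧸ J)).comp (I ^ r).subtype) (x ⊗ₜ[A] (1 : A ⧸ J)) =
        Ideal.Quotient.mk J x := fun x => by
    simp [Algebra.smul_def]
  constructor
  · rw [injective_iff_map_eq_zero]
    intro t ht
    obtain ⟨x, rfl⟩ := exists_tmul_one J (I ^ r) t
    rw [hval, Ideal.Quotient.eq_zero_iff_mem] at ht
    exact tmul_one_eq_zero J _ x (inf_map_le_mul _ m hflat ⟨x.2, ht⟩)
  · ext y
    rw [← Ideal.map_pow, Submodule.restrictScalars_mem,
      Ideal.mem_map_iff_of_surjective _ Ideal.Quotient.mk_surjective]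
    constructor
    · rintro ⟨t, rfl⟩
      obtain ⟨x, rfl⟩ := exists_tmul_one J (I ^ r) t
      exact ⟨x, x.2, (hval x).symm⟩
    · rintro ⟨x, hx, rfl⟩
      exact ⟨⟨x, hx⟩ ⊗ₜ 1, hval _⟩
end

section
/- Let k be an algebraically closed field, R a reduced finitely generated k-algebra, A a commutative R-algebra, and I an ideal of A such that for every natural number r the quotient A/I^r is a finitely generated R-module. Assume that for every r the k-dimension of A/(I^r + mA) is the same for all maximal ideals m of R. Then for every maximal ideal m of R and every r, the natural A-linear map I^r ⊗_A (A/mA) → A/mA induced by the inclusion I^r ⊆ A is injective, and its image is Ī^r, the r-th power of the image ideal of I in A/mA. -/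
/-! The map sends `x ⊗ 1` to the class of `x`, so the image is clear and injectivity amounts to
`I ^ r ∩ mA = m I ^ r`. This follows from the vanishing of `Tor₁ (A ⧸ I ^ r, R ⧸ m)`, which
holds because a finite module with constant fibre dimension over a reduced Jacobson ring is
locally free.

The local freeness is used in the following elementary form. Let `J = I ^ r` and lift a `k`-basis
of `A ⧸ (J + mA)` to elements `E i` of `A`. By Nakayama some `f ∉ m` multiplies `A ⧸ J` into the
`R`-span of the `E i`. For each maximal ideal `m'` not containing `f`, the `E i` then span
`A ⧸ (J + m'A)`; as their number is its dimension, they form a basis. Hence the coefficients of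
a relation `∑ c i • E i ∈ J` lie in every such `m'`, so each `f * c i` lies in all maximal
ideals and vanishes (`exists_almost_basis`). Thus, up to multiplication by `f`, the module `A ⧸ J`
is free, and `mem_mul_of_mem_inf` concludes by a direct computation, `f` being invertible
modulo `m`. -/

/-- Weak Nullstellensatz: `k → R ⧸ m` is surjective. -/
lemma exists_scalar_sub_mem {k R : Type*} [Field k] [IsAlgClosed k] [CommRing R] [Algebra k R]
    [Algebra.FiniteType k R] (m : Ideal R) (hm : m.IsMaximal) (x : R) :
    ∃ c : k, x - algebraMap k R c ∈ m := by
  let _ : Field (R ⧸ m) := Ideal.Quotient.field m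
  have : Algebra.FiniteType k (R ⧸ m) := inferInstance
  have : Module.Finite k (R ⧸ m) := finite_of_finite_type_of_isJacobsonRing k (R ⧸ m)
  obtain ⟨c, hc⟩ := (IsAlgClosed.algebraMap_bijective_of_isIntegral (k := k) (K := R ⧸ m)).2
    (Ideal.Quotient.mk m x)
  exact ⟨c, Ideal.Quotient.eq.mp hc.symm⟩

/-- On a module killed by a maximal ideal, `R`-spans are contained in `k`-spans. -/
lemma mem_span_field_of_mem_span {k R V : Type*} [Field k] [IsAlgClosed k] [CommRing R]
    [Algebra k R] [Algebra.FiniteType k R] [AddCommGroup V] [Module R V] [Module k V]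
    [IsScalarTower k R V] (m : Ideal R) (hm : m.IsMaximal) (hV : ∀ t ∈ m, ∀ v : V, t • v = 0)
    {s : Set V} {v : V} (hv : v ∈ Submodule.span R s) : v ∈ Submodule.span k s := by
  induction hv using Submodule.span_induction with
  | mem x hx => exact Submodule.subset_span hx
  | zero => exact zero_mem _
  | add x y _ _ hx hy => exact add_mem hx hy
  | smul a x _ hx =>
    obtain ⟨c, hc⟩ := exists_scalar_sub_mem (k := k) m hm a
    have h := hV _ hc x
    rw [sub_smul, algebraMap_smul, sub_eq_zero] at h
    rw [h]
    exact Submodule.smul_mem _ _ hx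

lemma smul_quotient_eq_zero {R A : Type*} [CommRing R] [CommRing A] [Algebra R A]
    (J : Ideal A) (m : Ideal R) (t : R) (ht : t ∈ m)
    (v : A ⧸ (J ⊔ m.map (algebraMap R A))) : t • v = 0 := by
  obtain ⟨a, rfl⟩ := Ideal.Quotient.mk_surjective v
  rw [Algebra.smul_def, IsScalarTower.algebraMap_apply R A, Ideal.Quotient.algebraMap_eq,
    ← map_mul, Ideal.Quotient.eq_zero_iff_mem]
  exact Ideal.mul_mem_right _ _ (Ideal.mem_sup_right (Ideal.mem_map_of_mem _ ht))

/-- Freeness of `A ⧸ J` near `m`, up to a denominator: a finite family in `A` and an `f ∉ m` such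
that `f` multiplies `A ⧸ J` into the span of the family and kills the coefficients of every
relation of the family modulo `J`. -/
lemma exists_almost_basis {k R A : Type*} [Field k] [IsAlgClosed k]
    [CommRing R] [IsReduced R] [Algebra k R] [Algebra.FiniteType k R]
    [CommRing A] [Algebra R A] [Algebra k A] [IsScalarTower k R A]
    (J : Ideal A) (hfin : Module.Finite R (A ⧸ J))
    (hdim : ∀ m m' : Ideal R, m.IsMaximal → m'.IsMaximal →
      Module.rank k (A ⧸ (J ⊔ m.map (algebraMap R A))) =
        Module.rank k (A ⧸ (J ⊔ m'.map (algebraMap R A))))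
    (m : Ideal R) (hm : m.IsMaximal) :
    ∃ (n : ℕ) (E : Fin n → A) (f : R), f - 1 ∈ m ∧
      (∀ a : A, ∃ c : Fin n → R, f • a - ∑ i, c i • E i ∈ J) ∧
      (∀ c : Fin n → R, ∑ i, c i • E i ∈ J → ∀ i, f * c i = 0) := by
  -- The projection from `A ⧸ J` to the fibre at `p`.
  let q : ∀ p : Ideal R, (A ⧸ J) →ₗ[R] (A ⧸ (J ⊔ p.map (algebraMap R A))) := fun p =>
    (Ideal.Quotient.factorₐ R (le_sup_left : J ≤ J ⊔ p.map (algebraMap R A))).toLinearMap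
  have hq : ∀ p (a : A), q p (Ideal.Quotient.mk J a) = Ideal.Quotient.mk _ a := fun p a => rfl
  have hfinQ : ∀ p : Ideal R, p.IsMaximal →
      Module.Finite k (A ⧸ (J ⊔ p.map (algebraMap R A))) := by
    intro p hp
    have : Module.Finite R (A ⧸ (J ⊔ p.map (algebraMap R A))) :=
      Module.Finite.of_surjective (q p) (Ideal.Quotient.factor_surjective le_sup_left)
    obtain ⟨s, hs⟩ := this.fg_top
    refine ⟨⟨s, ?_⟩⟩
    rw [eq_top_iff]
    intro v _
    exact mem_span_field_of_mem_span p hp (smul_quotient_eq_zero J p) (hs ▸ Submodule.mem_top)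
  have := hfinQ m hm
  let b := Module.finBasis k (A ⧸ (J ⊔ m.map (algebraMap R A)))
  choose E hE using fun i => Ideal.Quotient.mk_surjective (b i)
  let N : Submodule R (A ⧸ J) := Submodule.span R (Set.range fun i => Ideal.Quotient.mk J (E i))
  -- Nakayama's lemma, applied to `(A ⧸ J) ⧸ N`.
  have hle : (⊤ : Submodule R ((A ⧸ J) ⧸ N)) ≤ m • ⊤ := by
    rintro v -
    obtain ⟨w, rfl⟩ := N.mkQ_surjective v
    obtain ⟨a, rfl⟩ := Ideal.Quotient.mk_surjective w
    have h1 := b.sum_repr (Ideal.Quotient.mk _ a)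
    have h2 : a - ∑ i, algebraMap k A (b.repr (Ideal.Quotient.mk _ a) i) * E i ∈
        J ⊔ m.map (algebraMap R A) := by
      rw [← Ideal.Quotient.eq_zero_iff_mem, map_sub, sub_eq_zero]
      conv_lhs => rw [← h1]
      rw [map_sum]
      refine Finset.sum_congr rfl fun i _ => ?_
      rw [map_mul, hE, Algebra.smul_def]
      rfl
    obtain ⟨y, hy, z, hz, hyz⟩ := Submodule.mem_sup.mp h2
    have h3 : N.mkQ (Ideal.Quotient.mk J a) = N.mkQ (Ideal.Quotient.mk J z) := by
      rw [← sub_eq_zero, ← map_sub, ← map_sub, ← LinearMap.mem_ker, Submodule.ker_mkQ]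
      have : a - z = y + ∑ i, algebraMap k A (b.repr (Ideal.Quotient.mk _ a) i) * E i := by
        linear_combination -hyz
      rw [this, map_add, Ideal.Quotient.eq_zero_iff_mem.mpr hy, zero_add, map_sum]
      refine Submodule.sum_mem _ fun i _ => ?_
      rw [IsScalarTower.algebraMap_apply k R A, ← Algebra.smul_def]
      exact N.smul_mem _ (Submodule.subset_span ⟨i, rfl⟩)
    rw [h3]
    have hz' : z ∈ m • (⊤ : Submodule R A) := by rwa [Ideal.smul_top_eq_map]
    clear h3 hyz hz
    induction hz' using Submodule.smul_induction_on' with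
    | smul t ht a _ => exact Submodule.smul_mem_smul ht (Submodule.mem_top (x := N.mkQ
        (Ideal.Quotient.mk J a)))
    | add x _ y _ hx hy => rw [map_add, map_add]; exact add_mem hx hy
  obtain ⟨f, hf, hfN⟩ := Submodule.exists_sub_one_mem_and_smul_eq_zero_of_fg_of_le_smul m
    (⊤ : Submodule R ((A ⧸ J) ⧸ N)) Module.Finite.fg_top hle
  have hfN' : ∀ w : A ⧸ J, f • w ∈ N := fun w => by
    have := hfN (N.mkQ w) trivial
    rwa [← map_smul, ← LinearMap.mem_ker, Submodule.ker_mkQ] at this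
  refine ⟨_, E, f, hf, fun a => ?_, fun c hc i => ?_⟩
  · obtain ⟨c, hc⟩ := (Submodule.mem_span_range_iff_exists_fun R).mp
      (hfN' (Ideal.Quotient.mk J a))
    refine ⟨c, ?_⟩
    rw [← Ideal.Quotient.eq_zero_iff_mem, map_sub, sub_eq_zero, map_sum]
    exact hc.symm
  · have hJac : IsJacobsonRing R := isJacobsonRing_of_finiteType (A := k)
    have hbot : (⊥ : Ideal R).jacobson = ⊥ :=
      hJac.out Ideal.isRadical_bot
    rw [← Ideal.mem_bot, ← hbot, Ideal.jacobson, Submodule.mem_sInf]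
    -- Every maximal ideal `m'` contains `f * c i`; the case of interest is `f ∉ m'`.
    rintro (m' : Ideal R) ⟨-, hm'⟩
    by_cases hfm : f ∈ m'
    · exact Ideal.mul_mem_right _ _ hfm
    refine Ideal.mul_mem_left _ _ ?_
    have := hfinQ m' hm'
    obtain ⟨d, hd⟩ := exists_scalar_sub_mem (k := k) m' hm' f
    have hd0 : d ≠ 0 := by
      rintro rfl
      simp at hd
      exact hfm hd
    let e : Fin _ → A ⧸ (J ⊔ m'.map (algebraMap R A)) := fun i => Ideal.Quotient.mk _ (E i)
    have hspan : ⊤ ≤ Submodule.span k (Set.range e) := by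
      rintro v -
      obtain ⟨a, rfl⟩ := Ideal.Quotient.mk_surjective v
      have h1 : q m' (f • Ideal.Quotient.mk J a) ∈ Submodule.span R (Set.range e) := by
        have := Submodule.mem_map_of_mem (f := q m') (hfN' (Ideal.Quotient.mk J a))
        simp only [N] at this
        rw [Submodule.map_span, ← Set.range_comp] at this
        exact this
      have h2 := mem_span_field_of_mem_span (k := k) m' hm' (smul_quotient_eq_zero J m') h1
      have h3 := smul_quotient_eq_zero J m' _ hd (Ideal.Quotient.mk _ a)
      rw [sub_smul, algebraMap_smul, sub_eq_zero] at h3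
      rw [map_smul, hq, h3] at h2
      exact (Submodule.smul_mem_iff _ hd0).mp h2
    have hli : LinearIndependent k e := by
      refine linearIndependent_of_top_le_span_of_card_eq_finrank hspan ?_
      rw [Fintype.card_fin, Module.finrank, Module.finrank, hdim m m' hm hm']
    choose g hg using fun i => exists_scalar_sub_mem (k := k) m' hm' (c i)
    have hrel : ∑ i, g i • e i = 0 := by
      have h0 : Ideal.Quotient.mk (J ⊔ m'.map (algebraMap R A)) (∑ i, c i • E i) = 0 :=
        Ideal.Quotient.eq_zero_iff_mem.mpr (Ideal.mem_sup_left hc)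
      rw [← h0, map_sum]
      refine Finset.sum_congr rfl fun i _ => ?_
      have h3 := smul_quotient_eq_zero J m' _ (hg i) (e i)
      rw [sub_smul, algebraMap_smul, sub_eq_zero] at h3
      exact h3.symm
    have hgi := Fintype.linearIndependent_iff.mp hli g hrel i
    have := hg i
    rwa [hgi, map_zero, sub_zero] at this

/-- `J ∩ mA ⊆ mJ`, the concrete consequence of `Tor₁ (A ⧸ J, R ⧸ m) = 0`. -/
lemma mem_mul_of_mem_inf {k R A : Type*} [Field k] [IsAlgClosed k]
    [CommRing R] [IsReduced R] [Algebra k R] [Algebra.FiniteType k R]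
    [CommRing A] [Algebra R A] [Algebra k A] [IsScalarTower k R A]
    (J : Ideal A) (hfin : Module.Finite R (A ⧸ J))
    (hdim : ∀ m m' : Ideal R, m.IsMaximal → m'.IsMaximal →
      Module.rank k (A ⧸ (J ⊔ m.map (algebraMap R A))) =
        Module.rank k (A ⧸ (J ⊔ m'.map (algebraMap R A))))
    (m : Ideal R) (hm : m.IsMaximal) (x : A) (hxJ : x ∈ J)
    (hx : x ∈ m.map (algebraMap R A)) : x ∈ m.map (algebraMap R A) * J := by
  obtain ⟨n, E, f, hf, hgen, hrel⟩ := exists_almost_basis (k := k) J hfin hdim m hm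
  -- Write `y = ∑ tⱼ aⱼ` with `tⱼ ∈ m` and expand each `f • aⱼ` in the `E i`.
  have key : ∀ y ∈ m.map (algebraMap R A), ∃ c : Fin n → R,
      f • y - ∑ i, c i • E i ∈ m.map (algebraMap R A) * J := by
    intro y hy
    have hy' : y ∈ m • (⊤ : Submodule R A) := by rwa [Ideal.smul_top_eq_map]
    clear hy
    induction hy' using Submodule.smul_induction_on' with
    | smul t ht a _ =>
      obtain ⟨c, hc⟩ := hgen a
      refine ⟨fun i => t * c i, ?_⟩
      have := Ideal.mul_mem_mul (Ideal.mem_map_of_mem (algebraMap R A) ht) hc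
      rw [← Algebra.smul_def, smul_sub, smul_comm, Finset.smul_sum] at this
      simpa only [mul_smul] using this
    | add x _ y _ hx hy =>
      obtain ⟨c, hc⟩ := hx
      obtain ⟨d, hd⟩ := hy
      refine ⟨c + d, ?_⟩
      have := add_mem hc hd
      rw [← add_sub_add_comm, ← smul_add, ← Finset.sum_add_distrib] at this
      simpa only [Pi.add_apply, add_smul] using this
  obtain ⟨c, hc⟩ := key x hx
  have hcJ : ∑ i, c i • E i ∈ J := by
    have h1 : f • x ∈ J := by rw [Algebra.smul_def]; exact Ideal.mul_mem_left _ _ hxJ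
    have := sub_mem h1 (Ideal.mul_le_right hc)
    rwa [sub_sub_cancel] at this
  have hzero : f • ∑ i, c i • E i = 0 := by
    rw [Finset.smul_sum]
    exact Finset.sum_eq_zero fun i _ => by rw [← mul_smul, hrel c hcJ i, zero_smul]
  have hffx : f • f • x ∈ m.map (algebraMap R A) * J := by
    have := Ideal.mul_mem_left _ (algebraMap R A f) hc
    rwa [← Algebra.smul_def, smul_sub, hzero, sub_zero] at this
  -- `f * f - 1 ∈ m`, so `x` agrees with `f • f • x` modulo `m J`.
  have hff : f * f - 1 ∈ m := by
    have := Ideal.mul_mem_left _ (f + 1) hf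
    convert this using 1
    ring
  have h := Ideal.mul_mem_mul (Ideal.mem_map_of_mem (algebraMap R A) hff) hxJ
  have := sub_mem hffx h
  convert this using 1
  simp only [Algebra.smul_def, map_sub, map_mul, map_one]
  ring



open TensorProduct

/-- over an algebraically closed field `k`, with `R` a reduced finitely
generated `k`-algebra, `A` an `R`-algebra and `I` an ideal of `A` such that each
`A ⧸ I ^ r` is a finite `R`-module, if for every `r` the `k`-dimension of
`A ⧸ (I ^ r + mA)` is independent of the maximal ideal `m` of `R`, then for every
maximal ideal `m` and every `r` the natural map `I ^ r ⊗[A] (A ⧸ mA) → A ⧸ mA`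
is injective with image the `r`-th power of the image ideal of `I`. -/
theorem stmt_1 {k R A : Type*} [Field k] [IsAlgClosed k]
    [CommRing R] [IsReduced R] [Algebra k R] [Algebra.FiniteType k R]
    [CommRing A] [Algebra R A] [Algebra k A] [IsScalarTower k R A]
    (I : Ideal A)
    (hfin : ∀ r : ℕ, Module.Finite R (A ⧸ I ^ r))
    (hdim : ∀ (r : ℕ) (m m' : Ideal R), m.IsMaximal → m'.IsMaximal →
      Module.rank k (A ⧸ (I ^ r ⊔ m.map (algebraMap R A))) =
        Module.rank k (A ⧸ (I ^ r ⊔ m'.map (algebraMap R A))))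
    (m : Ideal R) (hm : m.IsMaximal) (r : ℕ) :
    Function.Injective
      (TensorProduct.lift
        ((LinearMap.lsmul A (A ⧸ m.map (algebraMap R A))).comp (I ^ r).subtype)) ∧
    LinearMap.range
      (TensorProduct.lift
        ((LinearMap.lsmul A (A ⧸ m.map (algebraMap R A))).comp (I ^ r).subtype)) =
      ((I.map (Ideal.Quotient.mk (m.map (algebraMap R A)))) ^ r).restrictScalars A := by
  have hmk : ∀ z : (I ^ r : Ideal A) ⊗[A] (A ⧸ m.map (algebraMap R A)),
      ∃ x : (I ^ r : Ideal A), z = x ⊗ₜ[A] 1 := by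
    intro z
    induction z using TensorProduct.induction_on with
    | zero => exact ⟨0, (TensorProduct.zero_tmul _ _).symm⟩
    | tmul x y =>
      obtain ⟨a, rfl⟩ := Ideal.Quotient.mk_surjective y
      refine ⟨a • x, ?_⟩
      rw [TensorProduct.smul_tmul, Algebra.smul_def, mul_one]
      rfl
    | add x y hx hy =>
      obtain ⟨u, rfl⟩ := hx
      obtain ⟨v, rfl⟩ := hy
      exact ⟨u + v, (TensorProduct.add_tmul _ _ _).symm⟩
  have hval : ∀ x : (I ^ r : Ideal A), TensorProduct.lift
      ((LinearMap.lsmul A (A ⧸ m.map (algebraMap R A))).comp (I ^ r).subtype) (x ⊗ₜ[A] 1) =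
      Ideal.Quotient.mk (m.map (algebraMap R A)) x := by
    intro x
    rw [TensorProduct.lift.tmul]
    simp [Algebra.smul_def]
  constructor
  · rw [injective_iff_map_eq_zero]
    intro z hz
    obtain ⟨x, rfl⟩ := hmk z
    rw [hval, Ideal.Quotient.eq_zero_iff_mem] at hz
    have hx := mem_mul_of_mem_inf (k := k) (I ^ r) (hfin r) (hdim r) m hm x x.2 hz
    have key : ∀ y ∈ m.map (algebraMap R A) * I ^ r, ∀ hy : y ∈ I ^ r,
        (⟨y, hy⟩ : (I ^ r : Ideal A)) ⊗ₜ[A] (1 : A ⧸ m.map (algebraMap R A)) = 0 := by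
      intro y hy
      induction hy using Submodule.mul_induction_on' with
      | mem_mul_mem s hs w hw =>
        intro hy
        have h1 : (⟨s * w, hy⟩ : (I ^ r : Ideal A)) = s • ⟨w, hw⟩ := rfl
        have h2 : s • (1 : A ⧸ m.map (algebraMap R A)) = 0 := by
          rw [Algebra.smul_def, mul_one]
          exact Ideal.Quotient.eq_zero_iff_mem.mpr hs
        rw [h1, TensorProduct.smul_tmul, h2, TensorProduct.tmul_zero]
      | add u hu v hv hu' hv' =>
        intro hy
        have h1 : (⟨u + v, hy⟩ : (I ^ r : Ideal A)) =
            ⟨u, Ideal.mul_le_right hu⟩ + ⟨v, Ideal.mul_le_right hv⟩ := rfl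
        rw [h1, TensorProduct.add_tmul, hu', hv', add_zero]
    exact key x hx x.2
  · ext y
    rw [← Ideal.map_pow, Submodule.restrictScalars_mem,
      Ideal.mem_map_iff_of_surjective _ Ideal.Quotient.mk_surjective]
    constructor
    · rintro ⟨z, rfl⟩
      obtain ⟨x, rfl⟩ := hmk z
      exact ⟨x, x.2, (hval x).symm⟩
    · rintro ⟨x, hx, rfl⟩
      exact ⟨⟨x, hx⟩ ⊗ₜ[A] 1, hval ⟨x, hx⟩⟩
end

section
/- Let R be a commutative ring, A a commutative R-algebra, I an ideal of A, and m an ideal of R. Assume that A/I^r is flat as an R-module for every natural number r. Let Ī denote the image of I in A/mA. Then the canonical homomorphism of graded (R/m)-algebras (⨁_{r≥0} I^r) ⊗_R (R/m) → ⨁_{r≥0} Ī^r, given in degree r by the map induced by reduction modulo mA, is an isomorphism; that is, the Rees algebra of I base-changed along R → R/m is canonically isomorphic to the Rees algebra of Ī. -/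
/-!
Every element of `(⨁ I ^ r) ⊗[R] (R ⧸ m)` has the form `s ⊗ 1`, so the image of the canonical map
is that of `reesToQuot`, which is the Rees algebra of `Ī` because `Ī ^ r` is the image of `I ^ r`
(`range_reesToQuot`), and injectivity amounts to `ker (reesToQuot I m) ⊆ m • ⨁ I ^ r`.
In degree `r` this containment reads `I ^ r ∩ mA ⊆ m I ^ r`, a consequence of the vanishing of
`Tor₁ᴿ(A ⧸ I ^ r, R ⧸ m)`. It is proved directly from flatness of `A ⧸ I ^ r`
(`sum_smul_mem_smul_ker`): a relation `∑ cᵢ aᵢ ∈ I ^ r` with `cᵢ ∈ m` becomes trivial modulo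
`I ^ r`, and lifting the trivialisation to `A` lets each `aᵢ` be replaced by an element of `I ^ r`.
-/

open TensorProduct Polynomial

section

variable {R A : Type*} [CommRing R] [CommRing A] [Algebra R A]

/-- The canonical `R`-algebra map from the Rees algebra of an ideal `I ⊆ A` to the
polynomial ring over `A ⧸ mA`, given by reducing coefficients modulo `mA`. -/
noncomputable def reesToQuot (I : Ideal A) (m : Ideal R) :
    ↥(reesAlgebra I) →ₐ[R] (A ⧸ m.map (algebraMap R A))[X] :=
  (Polynomial.mapAlgHom (Ideal.Quotient.mkₐ R (m.map (algebraMap R A)))).comp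
    ((reesAlgebra I).val.restrictScalars R)

/-- The canonical `R`-algebra map `R ⧸ m → (A ⧸ mA)[X]`. -/
noncomputable def quotToQuot (A : Type*) [CommRing A] [Algebra R A] (m : Ideal R) :
    (R ⧸ m) →ₐ[R] (A ⧸ m.map (algebraMap R A))[X] :=
  Ideal.Quotient.liftₐ m (Algebra.ofId R ((A ⧸ m.map (algebraMap R A))[X])) (by
    intro a ha
    have h0 : algebraMap R (A ⧸ m.map (algebraMap R A)) a = 0 := by
      rw [IsScalarTower.algebraMap_apply R A (A ⧸ m.map (algebraMap R A))]
      exact Ideal.Quotient.eq_zero_iff_mem.mpr (Ideal.mem_map_of_mem _ ha)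
    rw [Algebra.ofId_apply,
      IsScalarTower.algebraMap_apply R (A ⧸ m.map (algebraMap R A))
        ((A ⧸ m.map (algebraMap R A))[X]), h0, map_zero])

/-- By the equational criterion for flatness of `P`, a relation `∑ cᵢ f(xᵢ) = 0` in `P` with
`cᵢ ∈ m` is trivial; subtracting a lift of the trivialization moves every `xᵢ` into `ker f`. -/
theorem sum_smul_mem_smul_ker {M P : Type*} [AddCommGroup M] [Module R M] [AddCommGroup P]
    [Module R P] [Module.Flat R P] (f : M →ₗ[R] P) (hf : Function.Surjective f) (m : Ideal R)
    {ι : Type*} [Fintype ι] (c : ι → R) (x : ι → M) (hc : ∀ i, c i ∈ m)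
    (hx : f (∑ i, c i • x i) = 0) : ∑ i, c i • x i ∈ m • LinearMap.ker f := by
  have hrel : ∑ i, c i • f (x i) = 0 := by
    simpa only [map_sum, map_smul] using hx
  obtain ⟨k, a, y, hay, ha⟩ := Module.Flat.isTrivialRelation_of_sum_smul_eq_zero hrel
  choose y' hy' using fun j ↦ hf (y j)
  have hzero : ∑ i, c i • ∑ j, a i j • y' j = 0 := by
    simp_rw [Finset.smul_sum, smul_smul]
    rw [Finset.sum_comm]
    simp_rw [← Finset.sum_smul, ha, zero_smul, Finset.sum_const_zero]
  rw [← sub_zero (∑ i, c i • x i), ← hzero, ← Finset.sum_sub_distrib]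
  simp_rw [← smul_sub]
  refine Submodule.sum_mem _ fun i _ ↦ Submodule.smul_mem_smul (hc i) ?_
  simp only [LinearMap.mem_ker, map_sub, map_sum, map_smul, hy', hay i, sub_self]

/-- If `P` is flat and `f : M → P` is surjective, then `ker f ∩ mM ⊆ m ker f`. Equivalently,
`ker f ⊗ R ⧸ m → M ⊗ R ⧸ m` is injective. -/
theorem mem_smul_ker {M P : Type*} [AddCommGroup M] [Module R M] [AddCommGroup P]
    [Module R P] [Module.Flat R P] (f : M →ₗ[R] P) (hf : Function.Surjective f) (m : Ideal R)
    {x : M} (hxf : f x = 0) (hxm : x ∈ m • (⊤ : Submodule R M)) :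
    x ∈ m • LinearMap.ker f := by
  rw [← Submodule.span_univ, ← Set.range_id] at hxm
  obtain ⟨c, hc, hcx⟩ := (Submodule.mem_ideal_smul_span_iff_exists_sum m id x).mp hxm
  have hsum : x = ∑ i : c.support, c i • (i : M) :=
    hcx.symm.trans (Finset.sum_coe_sort c.support fun i ↦ c i • i).symm
  rw [hsum] at hxf ⊢
  exact sum_smul_mem_smul_ker f hf m (fun i : c.support ↦ c i) (fun i ↦ i) (fun i ↦ hc i) hxf

theorem mem_smul_of_mem_of_mem_map (J : Ideal A) (m : Ideal R) [Module.Flat R (A ⧸ J)] {x : A}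
    (hxJ : x ∈ J) (hxm : x ∈ m.map (algebraMap R A)) :
    x ∈ m • J.restrictScalars R := by
  have hker : LinearMap.ker (Ideal.Quotient.mkₐ R J).toLinearMap = J.restrictScalars R := by
    ext
    exact Ideal.Quotient.eq_zero_iff_mem
  rw [← hker]
  refine mem_smul_ker _ (Ideal.Quotient.mkₐ_surjective R J) m
    (Ideal.Quotient.eq_zero_iff_mem.mpr hxJ) ?_
  rw [Ideal.smul_top_eq_map]
  exact hxm

theorem coeff_reesToQuot (I : Ideal A) (m : Ideal R) (s : reesAlgebra I) (r : ℕ) :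
    (reesToQuot I m s).coeff r =
      Ideal.Quotient.mk (m.map (algebraMap R A)) ((s : A[X]).coeff r) :=
  Polynomial.coeff_map _ _

/-- The kernel of `reesToQuot I m` is contained in `m` times the Rees algebra. -/
theorem mem_smul_top_of_reesToQuot_eq_zero (I : Ideal A) (m : Ideal R)
    (hflat : ∀ r : ℕ, Module.Flat R (A ⧸ I ^ r)) {s : reesAlgebra I}
    (hs : reesToQuot I m s = 0) : s ∈ m • (⊤ : Submodule R (reesAlgebra I)) := by
  let S : Submodule R A[X] := (Subalgebra.toSubmodule (reesAlgebra I)).restrictScalars R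
  suffices h : (s : A[X]) ∈ m • S from (Submodule.mem_smul_top_iff m S s).mpr h
  rw [(s : A[X]).as_sum_support]
  refine Submodule.sum_mem _ fun r _ ↦ ?_
  have hcoeff : (s : A[X]).coeff r ∈ m • (I ^ r).restrictScalars R := by
    have := hflat r
    refine mem_smul_of_mem_of_mem_map (I ^ r) m (s.2 r) (Ideal.Quotient.eq_zero_iff_mem.mp ?_)
    rw [← coeff_reesToQuot, hs, coeff_zero]
  have hmap := Submodule.mem_map_of_mem (f := (monomial r : A →ₗ[A] A[X]).restrictScalars R) hcoeff
  rw [Submodule.map_smul''] at hmap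
  refine Submodule.smul_mono le_rfl ?_ hmap
  rintro _ ⟨a, ha, rfl⟩
  exact reesAlgebra.monomial_mem.mpr ha

theorem range_reesToQuot (I : Ideal A) (m : Ideal R) :
    (reesToQuot I m).range =
      (reesAlgebra (I.map (Ideal.Quotient.mk (m.map (algebraMap R A))))).restrictScalars R := by
  apply le_antisymm
  · rintro _ ⟨s, rfl⟩ r
    change (reesToQuot I m s).coeff r ∈ _
    rw [coeff_reesToQuot, ← Ideal.map_pow]
    exact Ideal.mem_map_of_mem _ (s.2 r)
  · intro f hf
    rw [f.as_sum_support]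
    refine Subalgebra.sum_mem _ fun r _ ↦ ?_
    have hr := hf r
    rw [← Ideal.map_pow] at hr
    obtain ⟨a, ha, har⟩ :=
      (Ideal.mem_map_iff_of_surjective _ Ideal.Quotient.mk_surjective).mp hr
    refine ⟨⟨monomial r a, reesAlgebra.monomial_mem.mpr ha⟩, ?_⟩
    rw [← har]
    exact Polynomial.map_monomial _

/-- Every element of `S ⊗[R] (R ⧸ m)` is of the form `s ⊗ 1`. -/
theorem exists_tmul_one_eq {S : Type*} [CommRing S] [Algebra R S] (m : Ideal R)
    (t : S ⊗[R] (R ⧸ m)) : ∃ s : S, s ⊗ₜ[R] (1 : R ⧸ m) = t := by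
  obtain ⟨s, hs⟩ := Submodule.Quotient.mk_surjective _ (tensorQuotEquivQuotSMul S m t)
  refine ⟨s, ?_⟩
  rw [← tensorQuotEquivQuotSMul_symm_mk, hs, LinearEquiv.symm_apply_apply]

/-- if `A ⧸ I ^ r` is flat over `R` for every `r`, then the canonical map
`(⨁_{r} I ^ r) ⊗[R] (R ⧸ m) → ⨁_{r} Ī ^ r` from the base change of the Rees algebra of
`I` to the Rees algebra of the image ideal `Ī ⊆ A ⧸ mA` (given in degree `r` by reduction
modulo `mA`) is an isomorphism: as a map into `(A ⧸ mA)[X]` it is injective and its range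
is the Rees algebra of `Ī`. -/
theorem stmt_2 (I : Ideal A) (m : Ideal R)
    (hflat : ∀ r : ℕ, Module.Flat R (A ⧸ I ^ r)) :
    Function.Injective
      (Algebra.TensorProduct.productMap (reesToQuot I m) (quotToQuot A m)) ∧
    (Algebra.TensorProduct.productMap (reesToQuot I m) (quotToQuot A m)).range =
      (reesAlgebra (I.map (Ideal.Quotient.mk (m.map (algebraMap R A))))).restrictScalars R := by
  have hone (s : reesAlgebra I) : Algebra.TensorProduct.productMap (reesToQuot I m)
      (quotToQuot A m) (s ⊗ₜ 1) = reesToQuot I m s := by simp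
  constructor
  · rw [injective_iff_map_eq_zero]
    intro t ht
    obtain ⟨s, rfl⟩ := exists_tmul_one_eq m t
    rw [hone] at ht
    rw [← tensorQuotEquivQuotSMul_symm_mk,
      (Submodule.Quotient.mk_eq_zero _).mpr (mem_smul_top_of_reesToQuot_eq_zero I m hflat ht),
      map_zero]
  · rw [← range_reesToQuot]
    apply le_antisymm
    · rintro _ ⟨t, rfl⟩
      obtain ⟨s, rfl⟩ := exists_tmul_one_eq m t
      exact ⟨s, (hone s).symm⟩
    · rintro _ ⟨s, rfl⟩
      exact ⟨s ⊗ₜ 1, hone s⟩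

end
end
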